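/- Let x ~ N(μ, Σ) on ℝ^n with Σ positive definite, A an n×d matrix of rank d, y ∈ ℝ^d. Let Q = [Q₁ Q₂] be orthogonal with Q₁ spanning the column space of A and Q₂ its null space, z₁* = (AᵀQ₁)⁻¹y, Σ̃ = QᵀΣQ with blocks Σ̃ᵢⱼ, μ̃ = Qᵀμ, B = Σ̃₂₁Σ̃₁₁⁻¹, Ṽ = Σ̃₂₂ - BΣ̃₁₁Bᵀ. Then the conditional distribution of x given Aᵀx = y is Gaussian with mean Q₁z₁* + Q₂(μ̃₂ + B(z₁* - μ̃₁)) and covariance Q₂ṼQ₂ᵀ. -/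

import Mathlib

open Matrix MeasureTheory ProbabilityTheory Real

/-- The multivariate Gaussian measure `N(m, S)` on `ℝ^p`, defined by its density with respect
to Lebesgue measure. -/
noncomputable def mvGaussian {p : ℕ} (m : Fin p → ℝ) (S : Matrix (Fin p) (Fin p) ℝ) :
    Measure (Fin p → ℝ) :=
  volume.withDensity fun x =>
    ENNReal.ofReal ((Real.sqrt ((2 * π) ^ p * S.det))⁻¹ *
      Real.exp (-(1/2) * ((x - m) ⬝ᵥ (S⁻¹ *ᵥ (x - m)))))

theorem lintegral_exp_neg_half_dotProduct_self (p : ℕ) :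
    ∫⁻ x : Fin p → ℝ, ENNReal.ofReal (Real.exp (-(1/2) * (x ⬝ᵥ x))) =
      ENNReal.ofReal (Real.sqrt ((2 * π) ^ p)) := by
  have hprod : ∀ x : Fin p → ℝ,
      Real.exp (-(1/2) * (x ⬝ᵥ x)) = ∏ i, Real.exp (-(1/2) * x i ^ 2) := fun x => by
    rw [← Real.exp_sum, dotProduct, Finset.mul_sum]
    simp only [sq]
  have hint : Integrable (fun x : ℝ => Real.exp (-(1/2) * x ^ 2)) :=
    integrable_exp_neg_mul_sq (by norm_num)
  simp only [hprod]
  have hint' : Integrable fun x : Fin p → ℝ => ∏ i, Real.exp (-(1/2) * x i ^ 2) :=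
    Integrable.fintype_prod fun _ => hint
  rw [← ofReal_integral_eq_lintegral_ofReal hint'
      (Filter.Eventually.of_forall fun x => by positivity),
    integral_fintype_prod_volume_eq_prod fun (_ : Fin p) (x : ℝ) => Real.exp (-(1/2) * x ^ 2)]
  simp only [integral_gaussian, Finset.prod_const, Finset.card_univ, Fintype.card_fin]
  congr 1
  rw [eq_comm, Real.sqrt_eq_iff_mul_self_eq (by positivity) (by positivity), ← mul_pow,
    Real.mul_self_sqrt (by positivity)]
  congr 1
  ring

open scoped MatrixOrder in
theorem exists_transpose_mul_self_of_posDef {p : ℕ} {S : Matrix (Fin p) (Fin p) ℝ}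
    (hS : S.PosDef) : ∃ C : Matrix (Fin p) (Fin p) ℝ, S = Cᵀ * C := by
  obtain ⟨C, hC⟩ := CStarAlgebra.nonneg_iff_eq_star_mul_self.mp hS.posSemidef.nonneg
  exact ⟨C, by rw [hC, star_eq_conjTranspose, conjTranspose_eq_transpose_of_trivial]⟩

theorem lintegral_mvGaussian_density {p : ℕ} {S : Matrix (Fin p) (Fin p) ℝ} (hS : S.PosDef) :
    ∫⁻ x : Fin p → ℝ, ENNReal.ofReal ((Real.sqrt ((2 * π) ^ p * S.det))⁻¹ *
      Real.exp (-(1/2) * (x ⬝ᵥ (S⁻¹ *ᵥ x)))) = 1 := by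
  obtain ⟨C, hC⟩ := exists_transpose_mul_self_of_posDef hS.inv
  have hdet : C.det ^ 2 = S.det⁻¹ := by
    have := congrArg det hC
    rw [det_mul, det_transpose, det_nonsing_inv, Ring.inverse_eq_inv'] at this
    rw [sq, this]
  have hC0 : C.det ≠ 0 := fun h => by
    rw [h] at hdet
    have := hS.det_pos
    have := inv_pos.2 this
    simp at hdet
    simp_all
  have key : ∫⁻ x : Fin p → ℝ, ENNReal.ofReal (Real.exp (-(1/2) * (x ⬝ᵥ (S⁻¹ *ᵥ x)))) =
      ENNReal.ofReal (Real.sqrt ((2 * π) ^ p * S.det)) := by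
    have hmap := Real.map_matrix_volume_pi_eq_smul_volume_pi hC0
    have hm : Measurable fun x : Fin p → ℝ => toLin' C x :=
      (LinearMap.continuous_of_finiteDimensional _).measurable
    have h := lintegral_map (μ := (volume : Measure (Fin p → ℝ)))
      (f := fun x : Fin p → ℝ => ENNReal.ofReal (Real.exp (-(1/2) * (x ⬝ᵥ x))))
      (by unfold dotProduct; fun_prop) hm
    rw [hmap, lintegral_smul_measure, lintegral_exp_neg_half_dotProduct_self] at h
    rw [Real.sqrt_mul (by positivity), ← abs_of_pos (Real.sqrt_pos.2 hS.det_pos)]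
    have hs : |√S.det| = |C.det⁻¹| := by
      rw [← sq_eq_sq_iff_abs_eq_abs, Real.sq_sqrt hS.det_pos.le, inv_pow, hdet, inv_inv]
    rw [hs, mul_comm, ENNReal.ofReal_mul (abs_nonneg _), ← smul_eq_mul, h]
    refine lintegral_congr fun x => ?_
    rw [hC, toLin'_apply, ← mulVec_mulVec, dotProduct_mulVec x, vecMul_transpose]
  have hpos : 0 < Real.sqrt ((2 * π) ^ p * S.det) := by
    have := hS.det_pos
    positivity
  simp_rw [ENNReal.ofReal_mul (inv_nonneg.2 hpos.le)]
  rw [lintegral_const_mul _ (by unfold dotProduct mulVec dotProduct; fun_prop), key,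
    ← ENNReal.ofReal_mul (inv_nonneg.2 hpos.le), inv_mul_cancel₀ hpos.ne', ENNReal.ofReal_one]

theorem lintegral_mvGaussian {p : ℕ} (m : Fin p → ℝ) (S : Matrix (Fin p) (Fin p) ℝ)
    {f : (Fin p → ℝ) → ENNReal} (hf : Measurable f) :
    ∫⁻ x, f x ∂(mvGaussian m S) =
      ∫⁻ x, ENNReal.ofReal ((Real.sqrt ((2 * π) ^ p * S.det))⁻¹ *
        Real.exp (-(1/2) * ((x - m) ⬝ᵥ (S⁻¹ *ᵥ (x - m))))) * f x := by
  rw [mvGaussian, lintegral_withDensity_eq_lintegral_mul _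
    (by unfold dotProduct mulVec dotProduct; fun_prop) hf]
  rfl

theorem mvGaussian_eq_map_add {p : ℕ} (m : Fin p → ℝ) (S : Matrix (Fin p) (Fin p) ℝ) :
    mvGaussian m S = (mvGaussian 0 S).map (fun x => m + x) := by
  refine Measure.ext_of_lintegral _ fun f hf => ?_
  rw [lintegral_map hf (by fun_prop), lintegral_mvGaussian _ _ hf,
    lintegral_mvGaussian _ _ (by fun_prop), ← lintegral_add_left_eq_self _ m]
  simp

theorem isProbabilityMeasure_mvGaussian {p : ℕ} (m : Fin p → ℝ) {S : Matrix (Fin p) (Fin p) ℝ}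
    (hS : S.PosDef) : IsProbabilityMeasure (mvGaussian m S) := by
  have : IsProbabilityMeasure (mvGaussian 0 S) := ⟨by
    rw [← lintegral_one, lintegral_mvGaussian _ _ measurable_const]
    simpa using lintegral_mvGaussian_density hS⟩
  rw [mvGaussian_eq_map_add]
  exact Measure.isProbabilityMeasure_map (by fun_prop)

/-- If the columns of `E` and `N` span and are `S`-orthogonal, the quadratic form of `S⁻¹` splits
as the sum of those of the inverses of the two diagonal blocks. -/
theorem dotProduct_inv_mulVec_eq_add {ι κ₁ κ₂ : Type*} [Fintype ι] [DecidableEq ι]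
    [Fintype κ₁] [DecidableEq κ₁] [Fintype κ₂] [DecidableEq κ₂]
    {S : Matrix ι ι ℝ} {E : Matrix ι κ₁ ℝ} {N : Matrix ι κ₂ ℝ}
    (hS : IsUnit S.det) (hE : IsUnit (Eᵀ * S * E).det) (hN : IsUnit (Nᵀ * S * N).det)
    (hEN : Eᵀ * S * N = 0) (hNE : Nᵀ * S * E = 0)
    (hspan : ∀ w : ι → ℝ, ∃ a b, w = E *ᵥ a + N *ᵥ b) (x : ι → ℝ) :
    x ⬝ᵥ (S⁻¹ *ᵥ x) = (Eᵀ *ᵥ x) ⬝ᵥ ((Eᵀ * S * E)⁻¹ *ᵥ (Eᵀ *ᵥ x)) +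
      (Nᵀ *ᵥ x) ⬝ᵥ ((Nᵀ * S * N)⁻¹ *ᵥ (Nᵀ *ᵥ x)) := by
  obtain ⟨a, b, hw⟩ := hspan (S⁻¹ *ᵥ x)
  have hx : x = S *ᵥ (E *ᵥ a + N *ᵥ b) := by
    rw [← hw, mulVec_mulVec, mul_nonsing_inv _ hS, one_mulVec]
  have hEx : Eᵀ *ᵥ x = (Eᵀ * S * E) *ᵥ a := by
    rw [hx]
    simp only [mulVec_add, mulVec_mulVec, ← Matrix.mul_assoc, hEN, zero_mulVec, add_zero]
  have hNx : Nᵀ *ᵥ x = (Nᵀ * S * N) *ᵥ b := by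
    rw [hx]
    simp only [mulVec_add, mulVec_mulVec, ← Matrix.mul_assoc, hNE, zero_mulVec, zero_add]
  have ha : (Eᵀ * S * E)⁻¹ *ᵥ (Eᵀ *ᵥ x) = a := by
    rw [hEx, mulVec_mulVec, nonsing_inv_mul _ hE, one_mulVec]
  have hb : (Nᵀ * S * N)⁻¹ *ᵥ (Nᵀ *ᵥ x) = b := by
    rw [hNx, mulVec_mulVec, nonsing_inv_mul _ hN, one_mulVec]
  rw [ha, hb, hw, dotProduct_add, dotProduct_mulVec, dotProduct_mulVec, mulVec_transpose,
    mulVec_transpose]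

/-- A linear coordinate splitting of `ℝⁿ` transports Lebesgue measure to a multiple of the product
Lebesgue measure. -/
theorem exists_lintegral_eq_smul_lintegral_lintegral {n d k : ℕ}
    {Q₁ : Matrix (Fin n) (Fin d) ℝ} {Q₂ : Matrix (Fin n) (Fin k) ℝ}
    (hQ₁ : Q₁ᵀ * Q₁ = 1) (hQ₂ : Q₂ᵀ * Q₂ = 1) (hQ₁₂ : Q₁ᵀ * Q₂ = 0)
    (hQfull : Q₁ * Q₁ᵀ + Q₂ * Q₂ᵀ = 1) :
    ∃ c : ENNReal, ∀ f : (Fin n → ℝ) → ENNReal, Measurable f →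
      ∫⁻ x, f x = c * ∫⁻ z₁, ∫⁻ z₂, f (Q₁ *ᵥ z₁ + Q₂ *ᵥ z₂) := by
  have hQ₂₁ : Q₂ᵀ * Q₁ = 0 := by
    simpa [transpose_mul] using congrArg transpose hQ₁₂
  let e : ((Fin d → ℝ) × (Fin k → ℝ)) ≃ₗ[ℝ] (Fin n → ℝ) :=
    LinearEquiv.ofLinearMap (Q₁.mulVecLin.coprod Q₂.mulVecLin)
      (Q₁ᵀ.mulVecLin.prod Q₂ᵀ.mulVecLin)
      (LinearMap.ext fun x => by
        simp [-mulVecLin_transpose, mulVec_mulVec, ← add_mulVec, hQfull])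
      (LinearMap.ext fun z => by
        simp [-mulVecLin_transpose, mulVec_add, mulVec_mulVec, hQ₁, hQ₂, hQ₁₂, hQ₂₁])
  let L := e.toContinuousLinearEquiv
  have : Measure.IsAddHaarMeasure (volume : Measure ((Fin d → ℝ) × (Fin k → ℝ))) := by
    rw [Measure.volume_eq_prod]
    exact Measure.prod.instIsAddHaarMeasure volume volume
  have hH : Measure.IsAddHaarMeasure
      ((volume : Measure ((Fin d → ℝ) × (Fin k → ℝ))).map L) :=
    L.isAddHaarMeasure_map volume
  obtain ⟨c, hc⟩ : ∃ c : NNReal, (volume : Measure (Fin n → ℝ)) =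
      c • (volume : Measure ((Fin d → ℝ) × (Fin k → ℝ))).map L :=
    ⟨_, Measure.isAddLeftInvariant_eq_smul _ _⟩
  refine ⟨c, fun f hf => ?_⟩
  conv_lhs => rw [hc]
  have hLm : Measurable L := L.continuous.measurable
  rw [lintegral_smul_measure, lintegral_map hf hLm, Measure.volume_eq_prod,
    lintegral_prod (fun z => f (L z)) (hf.comp hLm).aemeasurable]
  rfl

theorem isUnit_of_rank_eq {d : ℕ} {C : Matrix (Fin d) (Fin d) ℝ} (hC : C.rank = d) :
    IsUnit C := by
  rw [← mulVec_surjective_iff_isUnit]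
  have : LinearMap.range C.mulVecLin = ⊤ :=
    Submodule.eq_top_of_finrank_eq (by rw [← Matrix.rank, hC]; simp)
  exact LinearMap.range_eq_top.1 this

/-- Disintegration of a Gaussian along orthogonal coordinates: given the first coordinate, the
second one is Gaussian with the regression mean and the Schur complement covariance. -/
theorem exists_lintegral_mvGaussian_eq {n d k : ℕ}
    (μ : Fin n → ℝ) {S : Matrix (Fin n) (Fin n) ℝ} (hS : S.PosDef)
    {Q₁ : Matrix (Fin n) (Fin d) ℝ} {Q₂ : Matrix (Fin n) (Fin k) ℝ}
    (hQ₁ : Q₁ᵀ * Q₁ = 1) (hQ₂ : Q₂ᵀ * Q₂ = 1) (hQ₁₂ : Q₁ᵀ * Q₂ = 0)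
    (hQfull : Q₁ * Q₁ᵀ + Q₂ * Q₂ᵀ = 1)
    {B : Matrix (Fin k) (Fin d) ℝ} (hB : B = Q₂ᵀ * S * Q₁ * (Q₁ᵀ * S * Q₁)⁻¹)
    {V : Matrix (Fin k) (Fin k) ℝ} (hV : V = Q₂ᵀ * S * Q₂ - B * (Q₁ᵀ * S * Q₁) * Bᵀ) :
    V.PosDef ∧ ∃ r : (Fin d → ℝ) → ENNReal,
      ∀ f : (Fin n → ℝ) → ENNReal, Measurable f →
        ∫⁻ x, f x ∂(mvGaussian μ S) = ∫⁻ z₁, r z₁ *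
          ∫⁻ z₂, f (Q₁ *ᵥ z₁ + Q₂ *ᵥ z₂)
            ∂(mvGaussian (Q₂ᵀ *ᵥ μ + B *ᵥ (z₁ - Q₁ᵀ *ᵥ μ)) V) := by
  have hQ₂₁ : Q₂ᵀ * Q₁ = 0 := by
    simpa [transpose_mul] using congrArg transpose hQ₁₂
  have hSt : Sᵀ = S := by
    simpa [conjTranspose_eq_transpose_of_trivial] using hS.isHermitian.eq
  have hS₁₁ : (Q₁ᵀ * S * Q₁).PosDef := by
    have := hS.conjTranspose_mul_mul_same (B := Q₁)
      (Function.LeftInverse.injective (g := Q₁ᵀ.mulVec) fun x => by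
        rw [mulVec_mulVec, hQ₁, one_mulVec])
    rwa [conjTranspose_eq_transpose_of_trivial] at this
  have hu₁₁ : IsUnit (Q₁ᵀ * S * Q₁).det := hS₁₁.det_pos.ne'.isUnit
  set N := Q₂ - Q₁ * Bᵀ with hN
  have hNt : Nᵀ = Q₂ᵀ - B * Q₁ᵀ := by simp [hN]
  have hNE : Nᵀ * S * Q₁ = 0 := by
    rw [hNt, Matrix.sub_mul, Matrix.sub_mul, Matrix.mul_assoc B, Matrix.mul_assoc B, hB,
      Matrix.mul_assoc (Q₂ᵀ * S * Q₁), nonsing_inv_mul _ hu₁₁, Matrix.mul_one, sub_self]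
  have hEN : Q₁ᵀ * S * N = 0 := by
    simpa [transpose_mul, hSt, Matrix.mul_assoc] using congrArg transpose hNE
  have hVN : V = Nᵀ * S * N := by
    have h1 : Nᵀ * S * N = Nᵀ * S * Q₂ := by
      conv_lhs => rw [hN, Matrix.mul_sub, ← Matrix.mul_assoc, hNE, Matrix.zero_mul, sub_zero]
    have h2 : Q₁ᵀ * S * Q₂ = Q₁ᵀ * S * Q₁ * Bᵀ := by
      rw [hN, Matrix.mul_sub, sub_eq_zero, ← Matrix.mul_assoc] at hEN
      exact hEN
    rw [h1, hNt, hV, Matrix.sub_mul, Matrix.sub_mul, Matrix.mul_assoc B, Matrix.mul_assoc B,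
      Matrix.mul_assoc B, h2]
  have hQN : Q₂ᵀ * N = 1 := by
    rw [hN, Matrix.mul_sub, ← Matrix.mul_assoc, hQ₂₁, hQ₂, Matrix.zero_mul, sub_zero]
  have hVpos : V.PosDef := by
    have := hS.conjTranspose_mul_mul_same (B := N)
      (Function.LeftInverse.injective (g := Q₂ᵀ.mulVec) fun x => by
        rw [mulVec_mulVec, hQN, one_mulVec])
    rwa [conjTranspose_eq_transpose_of_trivial, ← hVN] at this
  refine ⟨hVpos, ?_⟩
  have hspan : ∀ w : Fin n → ℝ, ∃ a b, w = Q₁ *ᵥ a + N *ᵥ b := fun w => by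
    refine ⟨Q₁ᵀ *ᵥ w + Bᵀ *ᵥ (Q₂ᵀ *ᵥ w), Q₂ᵀ *ᵥ w, ?_⟩
    have : w = Q₁ *ᵥ (Q₁ᵀ *ᵥ w) + Q₂ *ᵥ (Q₂ᵀ *ᵥ w) := by
      rw [mulVec_mulVec, mulVec_mulVec, ← add_mulVec, hQfull, one_mulVec]
    conv_lhs => rw [this]
    rw [hN, mulVec_add, sub_mulVec, ← mulVec_mulVec _ Q₁]
    abel
  obtain ⟨c, hc⟩ := exists_lintegral_eq_smul_lintegral_lintegral hQ₁ hQ₂ hQ₁₂ hQfull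
  set m : (Fin d → ℝ) → (Fin k → ℝ) := fun z₁ => Q₂ᵀ *ᵥ μ + B *ᵥ (z₁ - Q₁ᵀ *ᵥ μ) with hm
  set cS := (Real.sqrt ((2 * π) ^ n * S.det))⁻¹
  set cV := (Real.sqrt ((2 * π) ^ k * V.det))⁻¹
  have hcS0 : 0 ≤ cS := by positivity
  have hcV0 : 0 < cV := by
    have := hVpos.det_pos
    positivity
  let ρ : (Fin d → ℝ) → ℝ := fun z₁ => cS / cV * Real.exp (-(1/2) *
    ((z₁ - Q₁ᵀ *ᵥ μ) ⬝ᵥ ((Q₁ᵀ * S * Q₁)⁻¹ *ᵥ (z₁ - Q₁ᵀ *ᵥ μ))))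
  have hρ : Measurable ρ := by
    unfold ρ dotProduct mulVec dotProduct
    fun_prop
  have hρ0 : ∀ z, 0 ≤ ρ z := fun z => by positivity
  have hdens : ∀ z₁ z₂, cS * Real.exp (-(1/2) * ((Q₁ *ᵥ z₁ + Q₂ *ᵥ z₂ - μ) ⬝ᵥ
      (S⁻¹ *ᵥ (Q₁ *ᵥ z₁ + Q₂ *ᵥ z₂ - μ)))) =
      ρ z₁ * (cV * Real.exp (-(1/2) * ((z₂ - m z₁) ⬝ᵥ (V⁻¹ *ᵥ (z₂ - m z₁))))) := by
    intro z₁ z₂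
    have h1 : Q₁ᵀ *ᵥ (Q₁ *ᵥ z₁ + Q₂ *ᵥ z₂ - μ) = z₁ - Q₁ᵀ *ᵥ μ := by
      rw [mulVec_sub, mulVec_add, mulVec_mulVec, mulVec_mulVec, hQ₁, hQ₁₂, one_mulVec,
        zero_mulVec, add_zero]
    have h2 : Q₂ᵀ *ᵥ (Q₁ *ᵥ z₁ + Q₂ *ᵥ z₂ - μ) = z₂ - Q₂ᵀ *ᵥ μ := by
      rw [mulVec_sub, mulVec_add, mulVec_mulVec, mulVec_mulVec, hQ₂, hQ₂₁, one_mulVec,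
        zero_mulVec, zero_add]
    have h3 : Nᵀ *ᵥ (Q₁ *ᵥ z₁ + Q₂ *ᵥ z₂ - μ) = z₂ - m z₁ := by
      rw [hNt, sub_mulVec, ← mulVec_mulVec, h1, h2]
      exact sub_sub _ _ _
    rw [dotProduct_inv_mulVec_eq_add hS.det_pos.ne'.isUnit hu₁₁
      (hVN ▸ hVpos.det_pos.ne'.isUnit) hEN hNE hspan, h1, h3, ← hVN, mul_add, Real.exp_add]
    simp only [ρ]
    field_simp
  refine ⟨fun z₁ => c * ENNReal.ofReal (ρ z₁), fun f hf => ?_⟩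
  rw [lintegral_mvGaussian _ _ hf, hc _ (by unfold dotProduct mulVec dotProduct; fun_prop)]
  have hmeas : Measurable fun z : (Fin d → ℝ) × (Fin k → ℝ) =>
      f (Q₁ *ᵥ z.1 + Q₂ *ᵥ z.2) * ENNReal.ofReal (cV * Real.exp (-(1/2) * ((z.2 - m z.1) ⬝ᵥ
        (V⁻¹ *ᵥ (z.2 - m z.1))))) := by
    unfold m dotProduct mulVec dotProduct
    fun_prop
  simp_rw [mul_assoc c]
  rw [lintegral_const_mul]
  · congr 1
    refine lintegral_congr fun z₁ => ?_
    rw [lintegral_mvGaussian _ _ (by unfold mulVec dotProduct; fun_prop), ← lintegral_const_mul]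
    · refine lintegral_congr fun z₂ => ?_
      rw [hdens, ENNReal.ofReal_mul (hρ0 z₁), mul_assoc]
    · unfold dotProduct mulVec dotProduct
      fun_prop
  · refine (ENNReal.measurable_ofReal.comp hρ).mul ?_
    convert hmeas.lintegral_prod_right' using 2 with z₁
    rw [lintegral_mvGaussian _ _ (by unfold mulVec dotProduct; fun_prop)]
    · exact lintegral_congr fun _ => mul_comm _ _
    · infer_instance

/-- Conditioning a Gaussian `x ~ N(μ, Σ)` on the affine constraint `Aᵀx = y`: for almost every
`y`, the conditional distribution of `x` given `Aᵀx = y` is the (degenerate) Gaussian with mean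
`Q₁z₁* + Q₂(μ̃₂ + B(z₁* - μ̃₁))` and covariance `Q₂ Ṽ Q₂ᵀ`, realized as the pushforward of
`N(μ̃₂ + B(z₁* - μ̃₁), Ṽ)` under `z₂ ↦ Q₁z₁* + Q₂z₂`. -/
theorem stmt16 {n d : ℕ}
    (μ : Fin n → ℝ) (Sig : Matrix (Fin n) (Fin n) ℝ) (hSig : Sig.PosDef)
    (P : Measure (Fin n → ℝ)) (hP : P = mvGaussian μ Sig) [IsFiniteMeasure P]
    (A : Matrix (Fin n) (Fin d) ℝ) (hA : A.rank = d)
    (Q₁ : Matrix (Fin n) (Fin d) ℝ) (Q₂ : Matrix (Fin n) (Fin (n - d)) ℝ)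
    (hQ₁ : Q₁ᵀ * Q₁ = 1) (hQ₂ : Q₂ᵀ * Q₂ = 1) (hQ₁₂ : Q₁ᵀ * Q₂ = 0)
    (hQfull : Q₁ * Q₁ᵀ + Q₂ * Q₂ᵀ = 1)
    (hcol : ∃ C : Matrix (Fin d) (Fin d) ℝ, A = Q₁ * C)
    (hnull : Aᵀ * Q₂ = 0)
    (μt₁ : Fin d → ℝ) (hμt₁ : μt₁ = Q₁ᵀ *ᵥ μ)
    (μt₂ : Fin (n - d) → ℝ) (hμt₂ : μt₂ = Q₂ᵀ *ᵥ μ)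
    (Sig11 : Matrix (Fin d) (Fin d) ℝ) (hSig11 : Sig11 = Q₁ᵀ * Sig * Q₁)
    (Sig21 : Matrix (Fin (n - d)) (Fin d) ℝ) (hSig21 : Sig21 = Q₂ᵀ * Sig * Q₁)
    (Sig22 : Matrix (Fin (n - d)) (Fin (n - d)) ℝ) (hSig22 : Sig22 = Q₂ᵀ * Sig * Q₂)
    (B : Matrix (Fin (n - d)) (Fin d) ℝ) (hB : B = Sig21 * Sig11⁻¹)
    (V : Matrix (Fin (n - d)) (Fin (n - d)) ℝ) (hV : V = Sig22 - B * Sig11 * Bᵀ)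
    (z₁ : (Fin d → ℝ) → (Fin d → ℝ)) (hz₁ : ∀ y, z₁ y = (Aᵀ * Q₁)⁻¹ *ᵥ y) :
    ∀ᵐ y ∂(P.map fun x => Aᵀ *ᵥ x),
      condDistrib id (fun x => Aᵀ *ᵥ x) P y =
        Measure.map (fun z₂ => Q₁ *ᵥ z₁ y + Q₂ *ᵥ z₂)
          (mvGaussian (μt₂ + B *ᵥ (z₁ y - μt₁)) V) := by
  obtain ⟨C, hC⟩ := hcol
  have hM : Aᵀ * Q₁ = Cᵀ := by
    rw [hC, transpose_mul, Matrix.mul_assoc, hQ₁, Matrix.mul_one]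
  have hMdet : IsUnit (Aᵀ * Q₁).det := by
    have hCr : C.rank = d := le_antisymm (by simpa using C.rank_le_width)
      (by
      have := rank_mul_le_right Q₁ C
      rwa [← hC, hA] at this)
    rw [hM, det_transpose]
    exact (isUnit_iff_isUnit_det C).1 (isUnit_of_rank_eq hCr)
  subst hμt₁ hμt₂ hSig11 hSig21 hSig22 hP
  obtain ⟨hVpos, r, hdis⟩ :=
    exists_lintegral_mvGaussian_eq μ hSig hQ₁ hQ₂ hQ₁₂ hQfull hB hV
  have hprob := fun m => isProbabilityMeasure_mvGaussian m hVpos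
  have hAx : ∀ v w, Aᵀ *ᵥ (Q₁ *ᵥ v + Q₂ *ᵥ w) = (Aᵀ * Q₁) *ᵥ v := fun v w => by
    rw [mulVec_add, mulVec_mulVec, mulVec_mulVec, hnull, zero_mulVec, add_zero]
  have hz : ∀ v, z₁ ((Aᵀ * Q₁) *ᵥ v) = v := fun v => by
    rw [hz₁, mulVec_mulVec, nonsing_inv_mul _ hMdet, one_mulVec]
  have hz₁m : Measurable z₁ := by
    rw [funext hz₁]
    unfold mulVec dotProduct
    fun_prop
  have hmul : ∀ {a b : ℕ} (T : Matrix (Fin a) (Fin b) ℝ), Measurable fun x => T *ᵥ x :=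
    fun T => by unfold mulVec dotProduct; fun_prop
  let h : (Fin d → ℝ) × (Fin (n - d) → ℝ) → (Fin n → ℝ) := fun p =>
    Q₁ *ᵥ z₁ p.1 + Q₂ *ᵥ (Q₂ᵀ *ᵥ μ + B *ᵥ (z₁ p.1 - Q₁ᵀ *ᵥ μ) + p.2)
  have hh : Measurable h :=
    ((hmul Q₁).comp (hz₁m.comp measurable_fst)).add ((hmul Q₂).comp
      ((((hmul B).comp ((hz₁m.comp measurable_fst).sub_const _)).const_add _).add measurable_snd))
  let κ : Kernel (Fin d → ℝ) (Fin n → ℝ) :=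
    (Kernel.id ×ₖ Kernel.const _ (mvGaussian 0 V)).map h
  have hκ : ∀ y, κ y = (mvGaussian (Q₂ᵀ *ᵥ μ + B *ᵥ (z₁ y - Q₁ᵀ *ᵥ μ)) V).map
      fun z₂ => Q₁ *ᵥ z₁ y + Q₂ *ᵥ z₂ := fun y => by
    rw [mvGaussian_eq_map_add, Measure.map_map ((hmul Q₂).const_add _) (by fun_prop),
      Kernel.map_apply _ hh, Kernel.prod_apply, Kernel.id_apply, Kernel.const_apply,
      Measure.dirac_prod, Measure.map_map hh (by fun_prop)]
    rfl
  have : IsMarkovKernel κ := Kernel.IsMarkovKernel.map _ hh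
  have key := condDistrib_ae_eq_of_measure_eq_compProd (μ := mvGaussian μ Sig) (Y := id)
    (fun x => Aᵀ *ᵥ x) measurable_id.aemeasurable (κ := κ) (by
      refine Measure.ext_of_lintegral _ fun f hf => ?_
      have hf' : Measurable fun x : Fin n → ℝ => f (Aᵀ *ᵥ x, x) :=
        hf.comp ((hmul _).prodMk measurable_id)
      have hg' : Measurable fun x : Fin n → ℝ => ∫⁻ b, f (Aᵀ *ᵥ x, b) ∂κ (Aᵀ *ᵥ x) :=
        hf.lintegral_kernel_prod_right'.comp (hmul Aᵀ)
      have hg : Measurable fun y => ∫⁻ b, f (y, b) ∂κ y := hf.lintegral_kernel_prod_right'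
      rw [lintegral_map hf ((hmul _).prodMk measurable_id), Measure.lintegral_compProd hf,
        lintegral_map hg (hmul _)]
      simp only [id_eq]
      rw [hdis _ hf', hdis _ hg']
      refine lintegral_congr fun v => ?_
      have hfv : Measurable fun b => f ((Aᵀ * Q₁) *ᵥ v, b) := hf.comp measurable_prodMk_left
      simp only [hAx, lintegral_const, measure_univ, mul_one]
      rw [hκ, hz, lintegral_map hfv ((hmul Q₂).const_add _)])
  filter_upwards [key] with y hy
  rw [hy, hκ]
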